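/- Conserved quantities as Hamiltonians: under these hypotheses, for every 1 ≤ m ≤ r and every n ∈ ℤ, C_m·M_n − M_n·C_m = (q−1)·Σ_{j=1}^{m} (−1)^j·C_{m-j}·M_{n+j}, where M_n := M_{1,n}. -/

import Mathlib

/-- ξ_{α,n} := M_{α,n} · M_{α,n+1}⁻¹ -/
def xiv {R : Type*} [Ring R] (M Mi : ℕ → ℤ → R) (α : ℕ) (n : ℤ) : R :=
  M α n * Mi α (n + 1)

/-- ξ_{α,n}⁻¹ = M_{α,n+1} · M_{α,n}⁻¹ -/
def xivInv {R : Type*} [Ring R] (M Mi : ℕ → ℤ → R) (α : ℕ) (n : ℤ) : R :=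
  M α (n + 1) * Mi α n

/-- x_{α,n} := ξ_{α,n}⁻¹ · ξ_{α-1,n} -/
def xv {R : Type*} [Ring R] (M Mi : ℕ → ℤ → R) (α : ℕ) (n : ℤ) : R :=
  xivInv M Mi α n * xiv M Mi (α - 1) n

/-- The Miura coefficient C_{m,n} = Σ_{r+1 ≥ α₁ > ⋯ > α_m ≥ 1}
∏_{j=1}^m x_{α_j, n+(r+1-α_j)-(j-1)} (ordered product, j increasing left to right). -/
def CMiura {R : Type*} [Ring R] (M Mi : ℕ → ℤ → R) (r : ℕ) (m : ℕ) (n : ℤ) : R :=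
  ∑ S ∈ Finset.powersetCard m (Finset.Icc 1 (r + 1)),
    (((S.sort (· ≤ ·)).reverse.zipIdx.map Prod.swap).map
      (fun ji => xv M Mi ji.2 (n + ((r : ℤ) + 1 - (ji.2 : ℤ)) - (ji.1 : ℤ)))).prod

/-!
Let `P_a = (D - x_a) ⋯ (D - x_1)`, where `D` is the shift of `n`. The M-system and the commutation
relations give the exchange relation
`(ξ_{α,n}⁻¹ - ξ_{α,n+1}⁻¹) ξ_{α-1,n} = ξ_{α+1,n}⁻¹ (ξ_{α,n} - ξ_{α,n-1})` for `1 ≤ α ≤ r`.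
Calling the left-hand side `c_{α,n}`, induction on `a` yields `D P_a D⁻¹ = P_a + c_a P_{a-1}`. Since
`M_{r+2,n} = 0` forces `ξ_{r+1,n}` to be constant, `c_{r+1} = 0` and the coefficients `C_{m,n}` of
`P_{r+1}` do not depend on `n`.

Splitting off the rightmost factor of `P_{r+1}` then gives, for every `n`, an expression
`C_m = b_{m,n-1} + b_{m-1,n} x_{1,n}` in which `b_{m,n-1}` and `b_{m-1,n}` commute with `M_{1,n}`,
while `x_{1,n} = M_{1,n+1} M_{1,n}⁻¹` satisfies `x_{1,n} M_{1,n} = M_{1,n+1}` and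
`M_{1,n} x_{1,n} = q M_{1,n+1}`. Hence the commutator of `C_m` and `M_{1,n}` is
`(1 - q) b_{m-1,n} M_{1,n+1}`, and the alternating sum telescopes to `-b_{m-1,n} M_{1,n+1}`.
-/

section MiuraCoefficients

variable {R : Type*} [Ring R]

/-- The coefficient `C_{m,n}` of `(D - x_a)(D - x_{a-1}) ⋯ (D - x_1) = ∑ (-1)^m C_{m,n} D^{a-m}`,
`D` being the shift `n ↦ n + 1`, defined by splitting off the leftmost factor.
The variables are indexed from zero: `x α n` stands for `x_{α+1,n}`. -/
def miuraCoeff (x : ℕ → ℤ → R) : ℕ → ℕ → ℤ → R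
  | _, 0, _ => 1
  | 0, _ + 1, _ => 0
  | a + 1, m + 1, n => miuraCoeff x a (m + 1) (n + 1) + x a n * miuraCoeff x a m n

@[simp]
theorem miuraCoeff_zero_right (x : ℕ → ℤ → R) (a : ℕ) (n : ℤ) : miuraCoeff x a 0 n = 1 := by
  rw [miuraCoeff]

@[simp]
theorem miuraCoeff_zero_left_succ (x : ℕ → ℤ → R) (m : ℕ) (n : ℤ) :
    miuraCoeff x 0 (m + 1) n = 0 := by
  rw [miuraCoeff]

theorem miuraCoeff_succ_succ (x : ℕ → ℤ → R) (a m : ℕ) (n : ℤ) :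
    miuraCoeff x (a + 1) (m + 1) n =
      miuraCoeff x a (m + 1) (n + 1) + x a n * miuraCoeff x a m n := by
  rw [miuraCoeff]

theorem miuraCoeff_congr {x y : ℕ → ℤ → R} {a : ℕ} (hxy : ∀ α < a, ∀ n, x α n = y α n)
    (m : ℕ) (n : ℤ) : miuraCoeff x a m n = miuraCoeff y a m n := by
  induction a generalizing m n with
  | zero => cases m <;> simp
  | succ a ih =>
    have ih := ih fun α hα => hxy α (by lia)
    cases m with
    | zero => simp
    | succ m => rw [miuraCoeff_succ_succ, miuraCoeff_succ_succ, ih, ih, hxy a (by lia)]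

theorem miuraCoeff_eq_zero_of_lt (x : ℕ → ℤ → R) {a m : ℕ} (ham : a < m) (n : ℤ) :
    miuraCoeff x a m n = 0 := by
  induction a generalizing m n with
  | zero => cases m <;> simp_all
  | succ a ih =>
    cases m with
    | zero => lia
    | succ m => rw [miuraCoeff_succ_succ, ih (by lia), ih (by lia), mul_zero, add_zero]

theorem miuraCoeff_succ_succ_right (x : ℕ → ℤ → R) (a m : ℕ) (n : ℤ) :
    miuraCoeff x (a + 1) (m + 1) n = miuraCoeff (fun α => x (α + 1)) a (m + 1) n +
      miuraCoeff (fun α => x (α + 1)) a m n * x 0 (n + a - m) := by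
  induction a generalizing m n with
  | zero => cases m <;> simp [miuraCoeff_succ_succ]
  | succ a ih =>
    rw [miuraCoeff_succ_succ, ih m (n + 1), miuraCoeff_succ_succ _ a m n]
    have hshift : n + 1 + (a : ℤ) - m = n + (a + 1 : ℕ) - m := by push_cast; ring
    rw [hshift]
    cases m with
    | zero => simp only [miuraCoeff_zero_right]; noncomm_ring
    | succ m =>
      have hshift' : n + (a : ℤ) - m = n + (a + 1 : ℕ) - (m + 1 : ℕ) := by push_cast; ring
      rw [ih m n, miuraCoeff_succ_succ _ a m n, hshift']
      noncomm_ring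

theorem commute_miuraCoeff {x : ℕ → ℤ → R} {Y : ℤ → R} {a : ℕ}
    (hxY : ∀ α < a, ∀ n k : ℤ, n - α ≤ k → k ≤ n + α + 1 → Commute (x α n) (Y k))
    {m : ℕ} {n k : ℤ} (hk₀ : n + a - m ≤ k) (hk₁ : k ≤ n + a - m + 1) :
    Commute (miuraCoeff x a m n) (Y k) := by
  induction a generalizing m n with
  | zero => cases m <;> simp
  | succ a ih =>
    have ih := fun m n => @ih (fun α hα => hxY α (by lia)) m n
    cases m with
    | zero => simp
    | succ m =>
      push_cast at hk₀ hk₁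
      rw [miuraCoeff_succ_succ]
      refine (ih _ _ (by push_cast; lia) (by push_cast; lia)).add_left ?_
      obtain hm | hm := lt_or_ge a m
      · simp [miuraCoeff_eq_zero_of_lt x hm]
      · exact (hxY a (by lia) n k (by lia) (by lia)).mul_left (ih _ _ (by lia) (by lia))

end MiuraCoefficients

section DescendingProducts

variable {R : Type*} [Ring R]

theorem reverse_sort_le_eq_sort_ge {ι : Type*} [LinearOrder ι] (S : Finset ι) :
    (S.sort (· ≤ ·)).reverse = S.sort (· ≥ ·) :=
  (S.sortedGT_sort.eq_reverse_of_mem_iff_of_sortedLT (by simp) S.sortedLT_sort).symm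

theorem sum_powersetCard_succ_insert {ι A : Type*} [DecidableEq ι] [AddCommMonoid A]
    {i : ι} {s : Finset ι} (hi : i ∉ s) (m : ℕ) (f : Finset ι → A) :
    ∑ S ∈ (insert i s).powersetCard (m + 1), f S =
      ∑ S ∈ s.powersetCard (m + 1), f S + ∑ S ∈ s.powersetCard m, f (insert i S) := by
  have notMem_of_mem {k : ℕ} {S : Finset ι} (hS : S ∈ s.powersetCard k) : i ∉ S :=
    fun h => hi ((Finset.mem_powersetCard.1 hS).1 h)
  rw [Finset.powersetCard_succ_insert hi, Finset.sum_union, Finset.sum_image]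
  · intro S hS T hT hST
    rw [← Finset.erase_insert (notMem_of_mem hS), hST, Finset.erase_insert (notMem_of_mem hT)]
  · rw [Finset.disjoint_left]
    intro S hS hS'
    obtain ⟨T, -, rfl⟩ := Finset.mem_image.1 hS'
    exact notMem_of_mem hS (Finset.mem_insert_self i T)

/-- The ordered product `∏_j x_{α_j, n - α_j - j}` over a list `α_0, α_1, …`, in the `zipIdx`
form in which the summands of `CMiura` are given. -/
def shiftedProd (x : ℕ → ℤ → R) (n : ℤ) (l : List ℕ) : R :=
  ((l.zipIdx.map Prod.swap).map fun ji => x ji.2 (n - (ji.2 : ℤ) - (ji.1 : ℤ))).prod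

@[simp]
theorem shiftedProd_nil (x : ℕ → ℤ → R) (n : ℤ) : shiftedProd x n [] = 1 := rfl

theorem shiftedProd_cons (x : ℕ → ℤ → R) (n : ℤ) (α : ℕ) (l : List ℕ) :
    shiftedProd x n (α :: l) = x α (n - α) * shiftedProd x (n - 1) l := by
  have hshift (β j : ℕ) : n - (β : ℤ) - ((j + 1 : ℕ) : ℤ) = n - 1 - β - j := by push_cast; ring
  simp [shiftedProd, List.zipIdx_succ, Function.comp_def, ← hshift]

theorem sum_shiftedProd_eq_miuraCoeff (x : ℕ → ℤ → R) (a m : ℕ) (n : ℤ) :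
    ∑ S ∈ (Finset.Icc 1 a).powersetCard m, shiftedProd x (n + a) (S.sort (· ≥ ·)) =
      miuraCoeff (fun α => x (α + 1)) a m n := by
  induction a generalizing m n with
  | zero =>
    cases m with
    | zero => simp
    | succ m => rw [Finset.powersetCard_eq_empty.2 (by simp), Finset.sum_empty,
        miuraCoeff_zero_left_succ]
  | succ a ih =>
    cases m with
    | zero => simp
    | succ m =>
      rw [← Finset.insert_Icc_right_eq_Icc_add_one (by lia),
        sum_powersetCard_succ_insert (by simp), miuraCoeff_succ_succ, ← ih, ← ih, Finset.mul_sum]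
      congr 1
      · refine Finset.sum_congr rfl fun S _ => ?_
        congr 1; push_cast; ring
      · refine Finset.sum_congr rfl fun S hS => ?_
        have hlt : ∀ β ∈ S, β < a + 1 := fun β hβ => by
          have := Finset.mem_Icc.1 ((Finset.mem_powersetCard.1 hS).1 hβ)
          lia
        rw [Finset.sort_insert _ (fun β hβ => (hlt β hβ).le) (fun h => (hlt _ h).ne rfl),
          shiftedProd_cons]
        congr 2 <;> push_cast <;> ring

theorem CMiura_eq_miuraCoeff (M Mi : ℕ → ℤ → R) (r m : ℕ) (n : ℤ) :
    CMiura M Mi r m n = miuraCoeff (fun α => xv M Mi (α + 1)) (r + 1) m n := by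
  have hshift (β j : ℕ) : n + ((r : ℤ) + 1 - β) - j = n + (r + 1 : ℕ) - β - j := by
    push_cast; ring
  simp only [← sum_shiftedProd_eq_miuraCoeff, ← reverse_sort_le_eq_sort_ge, CMiura, shiftedProd,
    hshift]

end DescendingProducts

section Conservation

variable {R : Type*} [Ring R]

/- With `P_a = (D - x_{a-1}) ⋯ (D - x_0)`, this is `D P_{a+1} D⁻¹ = P_{a+1} + c_a P_a`. -/
theorem miuraCoeff_add_one_eq_sub {x c : ℕ → ℤ → R} {N : ℕ}
    (hx₀ : ∀ n, x 0 (n + 1) = x 0 n - c 0 n)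
    (hx : ∀ α < N, ∀ n, x (α + 1) (n + 1) - c α (n + 1) = x (α + 1) n - c (α + 1) n)
    (hxc : ∀ α < N, ∀ n, x (α + 1) (n + 1) * c α n = c α (n + 1) * x α n)
    {a : ℕ} (ha : a ≤ N) (m : ℕ) (n : ℤ) :
    miuraCoeff x (a + 1) (m + 1) (n + 1) =
      miuraCoeff x (a + 1) (m + 1) n - c a n * miuraCoeff x a m n := by
  induction a generalizing m n with
  | zero => cases m <;> simp [miuraCoeff_succ_succ, hx₀]
  | succ a ih =>
    have ih := ih (by lia)
    rw [miuraCoeff_succ_succ x (a + 1) m (n + 1), ih m (n + 1), miuraCoeff_succ_succ x (a + 1) m n]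
    cases m with
    | zero =>
      simp only [miuraCoeff_zero_right]
      linear_combination (norm := noncomm_ring) hx a ha n
    | succ m =>
      rw [ih m n]
      have hP := miuraCoeff_succ_succ x a m n
      linear_combination (norm := noncomm_ring) hx a ha n * miuraCoeff x (a + 1) (m + 1) n +
        c a (n + 1) * hP - hxc a ha n * miuraCoeff x a m n

/-- The variable `x_{α+1,n} = ξ_{α+1,n}⁻¹ ξ_{α,n}` attached to a family of units `ξ`. -/
def miuraVar (ξ : ℕ → ℤ → Rˣ) (α : ℕ) (n : ℤ) : R :=
  ((ξ (α + 1) n)⁻¹ * ξ α n : Rˣ)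

/-- The quantity `(ξ_{α+1,n}⁻¹ - ξ_{α+1,n+1}⁻¹) ξ_{α,n}` by which the Miura coefficients of level
`α + 1` fail to be conserved. -/
def miuraDefect (ξ : ℕ → ℤ → Rˣ) (α : ℕ) (n : ℤ) : R :=
  (((ξ (α + 1) n)⁻¹ : Rˣ) - ((ξ (α + 1) (n + 1))⁻¹ : Rˣ)) * (ξ α n : R)

theorem miuraVar_sub_miuraDefect (ξ : ℕ → ℤ → Rˣ) (α : ℕ) (n : ℤ) :
    miuraVar ξ α n - miuraDefect ξ α n = ((ξ (α + 1) (n + 1))⁻¹ * ξ α n : Rˣ) := by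
  simp only [miuraVar, miuraDefect, Units.val_mul]
  noncomm_ring

theorem miuraCoeff_miuraVar_add_one {ξ : ℕ → ℤ → Rˣ} {N : ℕ} (hξ₀ : ∀ n, ξ 0 n = 1)
    (hξ : ∀ α < N, ∀ n, miuraDefect ξ α (n + 1) =
      ((ξ (α + 2) (n + 1))⁻¹ : Rˣ) * ((ξ (α + 1) (n + 1) : R) - ξ (α + 1) n))
    (hξN : ∀ n, ξ (N + 1) (n + 1) = ξ (N + 1) n) (m : ℕ) (n : ℤ) :
    miuraCoeff (miuraVar ξ) (N + 1) m (n + 1) = miuraCoeff (miuraVar ξ) (N + 1) m n := by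
  cases m with
  | zero => simp
  | succ m =>
    rw [miuraCoeff_add_one_eq_sub (c := miuraDefect ξ) ?_ ?_ ?_ le_rfl]
    · simp [miuraDefect, hξN]
    · intro n
      rw [miuraVar_sub_miuraDefect, miuraVar, hξ₀, hξ₀]
    · intro α hα n
      rw [miuraVar_sub_miuraDefect, hξ α hα, miuraVar, Units.val_mul, Units.val_mul]
      noncomm_ring
    · intro α hα n
      rw [hξ α hα, miuraVar, miuraVar, miuraDefect]
      simp only [Units.val_mul, mul_sub, sub_mul, mul_assoc, Units.mul_inv_cancel_left]

theorem miuraCoeff_miuraVar_eq {ξ : ℕ → ℤ → Rˣ} {N : ℕ} (hξ₀ : ∀ n, ξ 0 n = 1)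
    (hξ : ∀ α < N, ∀ n, miuraDefect ξ α (n + 1) =
      ((ξ (α + 2) (n + 1))⁻¹ : Rˣ) * ((ξ (α + 1) (n + 1) : R) - ξ (α + 1) n))
    (hξN : ∀ n, ξ (N + 1) (n + 1) = ξ (N + 1) n) (m : ℕ) (n : ℤ) :
    miuraCoeff (miuraVar ξ) (N + 1) m n = miuraCoeff (miuraVar ξ) (N + 1) m 0 := by
  have hper : Function.Periodic (miuraCoeff (miuraVar ξ) (N + 1) m) 1 :=
    miuraCoeff_miuraVar_add_one hξ₀ hξ hξN m
  simpa using hper.int_mul_eq n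

end Conservation

section Hamiltonians

variable {R : Type*} [Ring R]

theorem sum_neg_one_pow_mul_eq {C : ℕ → R} {b : ℕ → ℤ → R} {x Y : ℤ → R}
    (hC₀ : ∀ n, C 0 = b 0 n) (hC : ∀ m n, C (m + 1) = b (m + 1) (n - 1) + b m n * x n)
    (hxY : ∀ n, x n * Y n = Y (n + 1)) (m : ℕ) (n : ℤ) :
    ∑ j ∈ Finset.range (m + 1), (-1) ^ j * C (m - j) * Y (n + j) = b m (n - 1) * Y n := by
  induction m generalizing n with
  | zero => simp [hC₀ (n - 1)]
  | succ m ih =>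
    have htail : ∑ j ∈ Finset.range (m + 1), (-1) ^ (j + 1) * C (m - j) * Y (n + (j + 1 : ℕ)) =
        -(b m n * Y (n + 1)) := by
      have ih := ih (n + 1)
      rw [add_sub_cancel_right] at ih
      rw [← ih, ← Finset.sum_neg_distrib]
      refine Finset.sum_congr rfl fun j _ => ?_
      rw [show n + ((j + 1 : ℕ) : ℤ) = n + 1 + j by push_cast; ring, pow_succ]
      noncomm_ring
    rw [Finset.sum_range_succ']
    simp only [Nat.add_sub_add_right, htail]
    simp [hC m n, add_mul, mul_assoc, hxY]

theorem commutator_eq_sum {q : R} (hq : ∀ y, Commute q y) {C : ℕ → R} {b : ℕ → ℤ → R} {x Y : ℤ → R}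
    (hC₀ : ∀ n, C 0 = b 0 n) (hC : ∀ m n, C (m + 1) = b (m + 1) (n - 1) + b m n * x n)
    (hxY : ∀ n, x n * Y n = Y (n + 1)) (hYx : ∀ n, Y n * x n = q * Y (n + 1))
    (hbY : ∀ m n, Commute (b m n) (Y n)) (hbY' : ∀ m n, Commute (b m (n - 1)) (Y n))
    (m : ℕ) (n : ℤ) :
    C m * Y n - Y n * C m =
      (q - 1) * ∑ j ∈ Finset.Icc 1 m, (-1) ^ j * C (m - j) * Y (n + j) := by
  cases m with
  | zero => simp [hC₀ n, (hbY 0 n).eq]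
  | succ m =>
    have hsum : ∑ j ∈ Finset.Icc 1 (m + 1), (-1) ^ j * C (m + 1 - j) * Y (n + j) =
        -(b m n * Y (n + 1)) := by
      have htel := sum_neg_one_pow_mul_eq hC₀ hC hxY (m + 1) n
      rw [Finset.sum_range_eq_add_Ico _ (by lia), Finset.Ico_add_one_right_eq_Icc] at htel
      rw [← hxY n]
      simp only [pow_zero, one_mul, Nat.sub_zero, Nat.cast_zero, add_zero, hC m n] at htel
      linear_combination (norm := noncomm_ring) htel
    have hYbx : Y n * (b m n * x n) = q * (b m n * Y (n + 1)) := by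
      rw [← mul_assoc, ← (hbY m n).eq, mul_assoc, hYx, (hq (b m n)).left_comm]
    rw [hsum, hC m n, add_mul, mul_add, (hbY' (m + 1) n).eq, hYbx, mul_assoc, hxY]
    noncomm_ring

end Hamiltonians

section UnitIdentities

theorem commute_inv_mul_of_semiconjBy {G : Type*} [Group G] {a b y z : G}
    (ha : SemiconjBy a y z) (hb : SemiconjBy b y z) : Commute (a⁻¹ * b) y :=
  ha.inv_symm_left.mul_left hb

theorem mul_inv_sub_mul_inv_of_semiconjBy {R : Type*} [Ring R] {w a₀ a₁ a₂ : Rˣ} {P : R}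
    (hw : ∀ u, Commute w u) (h₀₁ : SemiconjBy a₀ a₁ (w * a₁))
    (hP : (w : R) * a₂ * a₀ = (a₁ : R) ^ 2 - P) :
    ((a₁ * a₀⁻¹ : Rˣ) : R) - (a₂ * a₁⁻¹ : Rˣ) = P * (a₁⁻¹ * a₀⁻¹ : Rˣ) := by
  have hmove : w * a₂ * a₀ * (a₁⁻¹ * a₀⁻¹) = a₂ * a₁⁻¹ := by
    have hinv : a₀ * a₁⁻¹ = (w * a₁)⁻¹ * a₀ := h₀₁.inv_right.eq
    calc w * a₂ * a₀ * (a₁⁻¹ * a₀⁻¹) = w * a₂ * (a₀ * a₁⁻¹) * a₀⁻¹ := by group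
      _ = w * (a₂ * a₁⁻¹) * w⁻¹ := by rw [hinv]; group
      _ = a₂ * a₁⁻¹ := by rw [(hw _).eq, mul_inv_cancel_right]
  have hsq : a₁ * a₀⁻¹ = a₁ ^ 2 * (a₁⁻¹ * a₀⁻¹) := by group
  rw [hsq, ← hmove, Units.val_mul (w * a₂ * a₀), Units.val_mul (a₁ ^ 2), ← sub_mul]
  push_cast
  rw [hP, sub_sub_cancel]

theorem exchange_monomials {G : Type*} [Group G] {a₀ a₁ a₂ b₁ b₂ d₁ d₂ y z : G}
    (hab : Commute a₁ b₁) (hab' : Commute a₂ b₂) (had : Commute a₁ d₁)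
    (ha₁b₂ : SemiconjBy a₁ b₂ y) (hb₁b₂ : SemiconjBy b₁ b₂ y)
    (ha₁a₂ : SemiconjBy a₁ a₂ z) (hd₁a₂ : SemiconjBy d₁ a₂ z) :
    d₂ * b₂ * (a₂⁻¹ * a₁⁻¹) * (b₁ * b₂⁻¹) =
      d₂ * d₁⁻¹ * (a₁ * a₂⁻¹ * (d₁ * b₁ * (a₁⁻¹ * a₀⁻¹)) * (a₀ * a₁⁻¹)) := by
  have hb₂ : Commute b₂ (a₂⁻¹ * (a₁⁻¹ * b₁)) :=
    hab'.symm.inv_right.mul_right (commute_inv_mul_of_semiconjBy ha₁b₂ hb₁b₂).symm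
  have ha₂ : Commute (d₁⁻¹ * a₁) a₂⁻¹ := (commute_inv_mul_of_semiconjBy hd₁a₂ ha₁a₂).inv_right
  have hb₁ : Commute b₁ (a₁⁻¹ * a₁⁻¹) := (hab.symm.inv_right).mul_right hab.symm.inv_right
  calc d₂ * b₂ * (a₂⁻¹ * a₁⁻¹) * (b₁ * b₂⁻¹) = d₂ * (b₂ * (a₂⁻¹ * (a₁⁻¹ * b₁))) * b₂⁻¹ := by group
    _ = d₂ * a₂⁻¹ * (a₁⁻¹ * b₁) := by rw [hb₂.eq]; group
    _ = d₂ * a₂⁻¹ * d₁⁻¹ * (d₁ * a₁) * (a₁⁻¹ * a₁⁻¹ * b₁) := by group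
    _ = d₂ * (a₂⁻¹ * (d₁⁻¹ * a₁)) * d₁ * (b₁ * (a₁⁻¹ * a₁⁻¹)) := by
      rw [← had.eq, hb₁.eq]; group
    _ = d₂ * d₁⁻¹ * (a₁ * a₂⁻¹ * (d₁ * b₁ * (a₁⁻¹ * a₀⁻¹)) * (a₀ * a₁⁻¹)) := by
      rw [← ha₂.eq]; group

end UnitIdentities

section QuantumMSystem

variable {R : Type*} [Ring R]

/-- Invertible solutions `U` of the quantum M-system of rank `r`, with the extended commutation
relations. The boundary value `M_{r+2,n} = 0` is not a unit, so the equation of level `r + 1` is a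
separate field. -/
structure IsQuantumMSystem (q : Rˣ) (r : ℕ) (U : ℕ → ℤ → Rˣ) : Prop where
  central : ∀ y : R, Commute (q : R) y
  zero : ∀ n, U 0 n = 1
  exchange : ∀ α < r, ∀ n, (q : R) ^ (α + 1) * U (α + 1) (n + 1) * U (α + 1) (n - 1) =
    (U (α + 1) n : R) ^ 2 - U (α + 2) n * U α n
  exchange_top : ∀ n, (q : R) ^ (r + 1) * U (r + 1) (n + 1) * U (r + 1) (n - 1) =
    (U (r + 1) n : R) ^ 2
  semiconjBy : ∀ {α β : ℕ} {n p : ℤ}, α ≤ r + 1 → β ≤ r + 1 → |p| ≤ |(β : ℤ) - α| + 1 →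
    SemiconjBy (U α n) (U β (n + p)) (q ^ (p * (min α β : ℕ)) * U β (n + p))

/-- The unit `ξ_{α,n} = M_{α,n} M_{α,n+1}⁻¹`. -/
def xiUnit (U : ℕ → ℤ → Rˣ) (α : ℕ) (n : ℤ) : Rˣ :=
  U α n * (U α (n + 1))⁻¹

theorem xiUnit_inv (U : ℕ → ℤ → Rˣ) (α : ℕ) (n : ℤ) :
    (xiUnit U α n)⁻¹ = U α (n + 1) * (U α n)⁻¹ := by
  rw [xiUnit, mul_inv_rev, inv_inv]

theorem exists_isQuantumMSystem {q : Rˣ} (hq : ∀ y : R, (q : R) * y = y * q) {r : ℕ}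
    {M Mi : ℕ → ℤ → R} (hM0 : ∀ n, M 0 n = 1) (hMtop : ∀ n, M (r + 2) n = 0)
    (hMiL : ∀ α n, α ≤ r + 1 → M α n * Mi α n = 1) (hMiR : ∀ α n, α ≤ r + 1 → Mi α n * M α n = 1)
    (hMsys : ∀ α n, 1 ≤ α → α ≤ r + 1 →
      (q : R) ^ α * M α (n + 1) * M α (n - 1) = M α n ^ 2 - M (α + 1) n * M (α - 1) n)
    (hext : ∀ (α β : ℕ) (n p : ℤ), α ≤ r + 1 → β ≤ r + 1 → |p| ≤ |(β : ℤ) - (α : ℤ)| + 1 →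
      M α n * M β (n + p) = ((q ^ (p * ((min α β : ℕ) : ℤ)) : Rˣ) : R) * M β (n + p) * M α n) :
    ∃ U : ℕ → ℤ → Rˣ, IsQuantumMSystem q r U ∧
      ∀ α n, α ≤ r + 1 → (U α n : R) = M α n ∧ ((U α n)⁻¹ : Rˣ) = Mi α n := by
  choose! U hU using fun α n (hα : α ≤ r + 1) =>
    show ∃ u : Rˣ, (u : R) = M α n ∧ (u⁻¹ : Rˣ) = Mi α n from
      ⟨⟨M α n, Mi α n, hMiL α n hα, hMiR α n hα⟩, rfl, rfl⟩
  have hUM {α : ℕ} (hα : α ≤ r + 1) (n : ℤ) : (U α n : R) = M α n := (hU α n hα).1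
  refine ⟨U, ⟨hq, fun n => ?_, fun α hα n => ?_, fun n => ?_, fun hα hβ hp => ?_⟩, hU⟩
  · exact Units.ext (by rw [hUM (by lia), hM0, Units.val_one])
  · simp only [hUM (show α ≤ r + 1 by lia), hUM (show α + 1 ≤ r + 1 by lia),
      hUM (show α + 2 ≤ r + 1 by lia)]
    exact hMsys (α + 1) n (by lia) (by lia)
  · simp only [hUM le_rfl, hMsys (r + 1) n (by lia) le_rfl, hMtop, zero_mul, sub_zero]
  · refine Units.ext ?_
    push_cast
    rw [hUM hα, hUM hβ]
    exact_mod_cast hext _ _ _ _ hα hβ hp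

namespace IsQuantumMSystem

variable {q : Rˣ} {r : ℕ} {U : ℕ → ℤ → Rˣ} (h : IsQuantumMSystem q r U)
include h

theorem commute_left (u : Rˣ) : Commute q u :=
  Units.ext (h.central u)

theorem commute {α β : ℕ} (hα : α ≤ r + 1) (hβ : β ≤ r + 1) (n : ℤ) :
    Commute (U α n) (U β n) := by
  simpa [Commute] using h.semiconjBy (n := n) (p := 0) hα hβ (by rw [abs_zero]; positivity)

theorem semiconjBy_add_one_of_le {α β : ℕ} (hβα : β ≤ α) (hα : α ≤ r + 1) (n : ℤ) :
    SemiconjBy (U α n) (U β (n + 1)) (q ^ β * U β (n + 1)) := by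
  have hsc := h.semiconjBy (n := n) (p := 1) hα (hβα.trans hα) (by simp)
  rwa [one_mul, zpow_natCast, min_eq_right hβα] at hsc

theorem semiconjBy_one {α : ℕ} (hα₁ : 1 ≤ α) (hα : α ≤ r + 1) {n k : ℤ} (hk : |k - n| ≤ α) :
    SemiconjBy (U α n) (U 1 k) (q ^ (k - n) * U 1 k) := by
  have hp : |k - n| ≤ |((1 : ℕ) : ℤ) - α| + 1 := by
    rw [abs_sub_comm _ (α : ℤ), abs_of_nonneg (by lia : (0 : ℤ) ≤ α - (1 : ℕ))]
    lia
  simpa [hα₁] using h.semiconjBy (n := n) hα (by lia) hp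

theorem xiUnit_inv_sub_of_exchange {α : ℕ} (hα : α ≤ r + 1) {n : ℤ} {P : R}
    (hP : (q : R) ^ α * U α (n + 1 + 1) * U α (n + 1 - 1) = (U α (n + 1) : R) ^ 2 - P) :
    (((xiUnit U α n)⁻¹ : Rˣ) : R) - ((xiUnit U α (n + 1))⁻¹ : Rˣ) =
      P * ((U α (n + 1))⁻¹ * (U α n)⁻¹ : Rˣ) := by
  rw [add_sub_cancel_right, ← Units.val_pow_eq_pow_val] at hP
  rw [xiUnit_inv, xiUnit_inv]
  exact mul_inv_sub_mul_inv_of_semiconjBy (fun u => (h.commute_left u).pow_left α)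
    (h.semiconjBy_add_one_of_le le_rfl hα n) hP

theorem xiUnit_inv_sub {α : ℕ} (hα : α < r) (n : ℤ) :
    (((xiUnit U (α + 1) n)⁻¹ : Rˣ) : R) - ((xiUnit U (α + 1) (n + 1))⁻¹ : Rˣ) =
      (U (α + 2) (n + 1) * U α (n + 1) * ((U (α + 1) (n + 1))⁻¹ * (U (α + 1) n)⁻¹) : Rˣ) := by
  rw [h.xiUnit_inv_sub_of_exchange (by lia) (h.exchange α hα (n + 1)), ← Units.val_mul,
    ← Units.val_mul]

theorem xiUnit_top_add_one (n : ℤ) : xiUnit U (r + 1) (n + 1) = xiUnit U (r + 1) n := by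
  have hdiff := h.xiUnit_inv_sub_of_exchange le_rfl (P := 0) (n := n)
    (by rw [h.exchange_top, sub_zero])
  rw [zero_mul, sub_eq_zero] at hdiff
  exact (inv_injective (Units.ext hdiff)).symm

theorem miuraDefect_xiUnit_add_one {α : ℕ} (hα : α < r) (n : ℤ) :
    miuraDefect (xiUnit U) α (n + 1) = ((xiUnit U (α + 2) (n + 1))⁻¹ : Rˣ) *
      ((xiUnit U (α + 1) (n + 1) : R) - xiUnit U (α + 1) n) := by
  have hξ : (xiUnit U (α + 1) (n + 1) : R) - xiUnit U (α + 1) n = xiUnit U (α + 1) (n + 1) *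
      (((xiUnit U (α + 1) n)⁻¹ : Rˣ) - ((xiUnit U (α + 1) (n + 1))⁻¹ : Rˣ)) *
        xiUnit U (α + 1) n := by
    simp [mul_sub, sub_mul]
  rw [hξ, miuraDefect, h.xiUnit_inv_sub hα, h.xiUnit_inv_sub hα, xiUnit_inv]
  simp only [← Units.val_mul, xiUnit]
  exact congrArg _ (exchange_monomials
    (h.commute (by lia) (by lia) _) (h.commute (by lia) (by lia) _) (h.commute (by lia) (by lia) _)
    (h.semiconjBy_add_one_of_le (by lia) (by lia) _)
    (h.semiconjBy_add_one_of_le (by lia) (by lia) _)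
    (h.semiconjBy_add_one_of_le (by lia) (by lia) _)
    (h.semiconjBy_add_one_of_le (by lia) (by lia) _))

theorem commute_miuraVar_xiUnit {α : ℕ} (hα : α < r) {n k : ℤ} (hk₀ : n - α ≤ k)
    (hk₁ : k ≤ n + α + 1) : Commute (miuraVar (xiUnit U) (α + 1) n) (U 1 k : R) := by
  have hsc {β : ℕ} (hαβ : α + 1 ≤ β) (hβ : β ≤ r + 1) :
      SemiconjBy (U β n) (U 1 k) (q ^ (k - n) * U 1 k) ∧
        SemiconjBy (U β (n + 1)) (U 1 k) (q ^ (k - (n + 1)) * U 1 k) :=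
    ⟨h.semiconjBy_one (by lia) hβ (abs_le.2 (by lia)),
      h.semiconjBy_one (by lia) hβ (abs_le.2 (by lia))⟩
  obtain ⟨ha₀, ha₁⟩ := hsc (β := α + 2) (by lia) (by lia)
  obtain ⟨hb₀, hb₁⟩ := hsc (β := α + 1) le_rfl (by lia)
  have hcomm : Commute ((xiUnit U (α + 2) n)⁻¹ * xiUnit U (α + 1) n)
      (q ^ (k - (n + 1)) * U 1 k) := by
    rw [xiUnit_inv, xiUnit]
    exact (ha₁.mul_left ha₀.inv_symm_left).mul_left (hb₀.mul_left hb₁.inv_symm_left)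
  have hzpow := ((h.commute_left ((xiUnit U (α + 2) n)⁻¹ * xiUnit U (α + 1) n)).zpow_left
    (k - (n + 1))).symm
  simpa [miuraVar] using (hzpow.inv_right.mul_right hcomm).units_val

theorem miuraVar_xiUnit_zero (n : ℤ) :
    miuraVar (xiUnit U) 0 n = (U 1 (n + 1) * (U 1 n)⁻¹ : Rˣ) := by
  simp [miuraVar, xiUnit, h.zero]

theorem miuraCoeff_eq (m : ℕ) (n : ℤ) :
    miuraCoeff (miuraVar (xiUnit U)) (r + 1) m n = miuraCoeff (miuraVar (xiUnit U)) (r + 1) m 0 :=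
  miuraCoeff_miuraVar_eq (fun n => by simp [xiUnit, h.zero])
    (fun _ hα n => h.miuraDefect_xiUnit_add_one hα n) h.xiUnit_top_add_one m n

theorem commutator_miuraCoeff (m : ℕ) (n : ℤ) :
    miuraCoeff (miuraVar (xiUnit U)) (r + 1) m 0 * U 1 n -
        U 1 n * miuraCoeff (miuraVar (xiUnit U)) (r + 1) m 0 =
      ((q : R) - 1) * ∑ j ∈ Finset.Icc 1 m,
        (-1) ^ j * miuraCoeff (miuraVar (xiUnit U)) (r + 1) (m - j) 0 * U 1 (n + j) := by
  set x := miuraVar (xiUnit U)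
  have hx₀ (n : ℤ) : x 0 n = (U 1 (n + 1) * (U 1 n)⁻¹ : Rˣ) := h.miuraVar_xiUnit_zero n
  have hcomm {m : ℕ} {n k : ℤ} (hk₀ : n + r - m ≤ k) (hk₁ : k ≤ n + r - m + 1) :
      Commute (miuraCoeff (fun α => x (α + 1)) r m n) (U 1 k : R) :=
    commute_miuraCoeff (Y := fun k => (U 1 k : R))
      (fun _ hα _ _ => h.commute_miuraVar_xiUnit hα) hk₀ hk₁
  refine commutator_eq_sum h.central (C := fun m => miuraCoeff x (r + 1) m 0)
    (b := fun m n => miuraCoeff (fun α => x (α + 1)) r m (n + m - r)) (x := x 0)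
    (Y := fun n => (U 1 n : R)) ?_ (fun m n => ?_) (fun n => ?_) (fun n => ?_)
    (fun m n => hcomm (by lia) (by lia)) (fun m n => hcomm (by lia) (by lia)) m n
  · simp
  · rw [← h.miuraCoeff_eq (m + 1) (n + m - r), miuraCoeff_succ_succ_right]
    congr 2
    · push_cast; ring
    · congr 1; ring
  · rw [hx₀, ← Units.val_mul, inv_mul_cancel_right]
  · have hsc := h.semiconjBy_add_one_of_le (le_refl 1) (by lia) n
    rw [pow_one] at hsc
    rw [hx₀, ← Units.val_mul, ← Units.val_mul, ← mul_assoc, hsc.eq,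
      mul_inv_cancel_right]

end IsQuantumMSystem

end QuantumMSystem

theorem quantum_Q_conserved_Hamiltonians_general
    {R : Type*} [Ring R] (q : Rˣ) (hq : ∀ x : R, (q : R) * x = x * (q : R))
    (r : ℕ) (M Mi : ℕ → ℤ → R)
    (hM0 : ∀ n : ℤ, M 0 n = 1)
    (hMtop : ∀ n : ℤ, M (r + 2) n = 0)
    (hMiL : ∀ (α : ℕ) (n : ℤ), α ≤ r + 1 → M α n * Mi α n = 1)
    (hMiR : ∀ (α : ℕ) (n : ℤ), α ≤ r + 1 → Mi α n * M α n = 1)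
    (hMsys : ∀ (α : ℕ) (n : ℤ), 1 ≤ α → α ≤ r + 1 →
      (q : R) ^ α * M α (n + 1) * M α (n - 1) = M α n ^ 2 - M (α + 1) n * M (α - 1) n)
    (hext : ∀ (α β : ℕ) (n p : ℤ), α ≤ r + 1 → β ≤ r + 1 →
      |p| ≤ |(β : ℤ) - (α : ℤ)| + 1 →
      M α n * M β (n + p) = ((q ^ (p * ((min α β : ℕ) : ℤ)) : Rˣ) : R) * M β (n + p) * M α n)
    (m : ℕ) (n : ℤ) :
    CMiura M Mi r m 0 * M 1 n - M 1 n * CMiura M Mi r m 0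
      = ((q : R) - 1) *
          ∑ j ∈ Finset.Icc 1 m, (-1 : R) ^ j * CMiura M Mi r (m - j) 0 * M 1 (n + (j : ℤ)) := by
  obtain ⟨U, hsys, hU⟩ := exists_isQuantumMSystem hq hM0 hMtop hMiL hMiR hMsys hext
  have hvar (α : ℕ) (hα : α < r + 1) (n : ℤ) : xv M Mi (α + 1) n = miuraVar (xiUnit U) α n := by
    obtain ⟨hα₀, hα₁⟩ : α ≤ r + 1 ∧ α + 1 ≤ r + 1 := by lia
    simp [xv, xiv, xivInv, miuraVar, xiUnit, hU _ _ hα₀, hU _ _ hα₁]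
  have hcoeff (m : ℕ) : CMiura M Mi r m 0 = miuraCoeff (miuraVar (xiUnit U)) (r + 1) m 0 := by
    rw [CMiura_eq_miuraCoeff, miuraCoeff_congr hvar]
  have hM₁ (n : ℤ) : M 1 n = U 1 n := (hU 1 n (by lia)).1.symm
  simpa only [hcoeff, hM₁] using hsys.commutator_miuraCoeff m n

theorem quantum_Q_conserved_Hamiltonians
    {R : Type*} [Ring R] (q A Δ : Rˣ)
    (hq : ∀ x : R, (q : R) * x = x * (q : R))
    (r : ℕ) (hr : 1 ≤ r)
    (M Mi : ℕ → ℤ → R)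
    (hM0 : ∀ n : ℤ, M 0 n = 1)
    (hMtop : ∀ n : ℤ, M (r + 2) n = 0)
    (hMiL : ∀ (α : ℕ) (n : ℤ), α ≤ r + 1 → M α n * Mi α n = 1)
    (hMiR : ∀ (α : ℕ) (n : ℤ), α ≤ r + 1 → Mi α n * M α n = 1)
    (hMsys : ∀ (α : ℕ) (n : ℤ), 1 ≤ α → α ≤ r + 1 →
      (q : R) ^ α * M α (n + 1) * M α (n - 1) = M α n ^ 2 - M (α + 1) n * M (α - 1) n)
    (hcom : ∀ (α β ε : ℕ) (n : ℤ), ε ≤ 1 → α ≤ r + 1 → β ≤ r + 1 →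
      M α n * M β (n + (ε : ℤ)) = (q : R) ^ (ε * min α β) * M β (n + (ε : ℤ)) * M α n)
    (hAΔ : ∀ n : ℤ, M (r + 1) n = ((A ^ n : Rˣ) : R) * (Δ : R))
    (hΔM : ∀ (α : ℕ) (n : ℤ), 1 ≤ α → α ≤ r + 1 →
      (Δ : R) * M α n = ((q ^ ((α : ℤ) * n) : Rˣ) : R) * M α n * (Δ : R))
    (hAM : ∀ (α : ℕ) (n : ℤ), 1 ≤ α → α ≤ r + 1 →
      (A : R) * M α n = ((q ^ (-(α : ℤ)) : Rˣ) : R) * M α n * (A : R))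
    (hΔA : (Δ : R) * (A : R) = (q : R) ^ (r + 1) * (A : R) * (Δ : R))
    (hext : ∀ (α β : ℕ) (n p : ℤ), α ≤ r + 1 → β ≤ r + 1 →
      |p| ≤ |(β : ℤ) - (α : ℤ)| + 1 →
      M α n * M β (n + p) = ((q ^ (p * ((min α β : ℕ) : ℤ)) : Rˣ) : R) * M β (n + p) * M α n) :
    ∀ (m : ℕ) (n : ℤ), 1 ≤ m → m ≤ r →
      CMiura M Mi r m 0 * M 1 n - M 1 n * CMiura M Mi r m 0
        = ((q : R) - 1) *
            ∑ j ∈ Finset.Icc 1 m, (-1 : R) ^ j * CMiura M Mi r (m - j) 0 * M 1 (n + (j : ℤ)) := by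
  intro m n _ _
  exact quantum_Q_conserved_Hamiltonians_general q hq r M Mi hM0 hMtop hMiL hMiR hMsys hext m n
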